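/- The upper constant max{1, 1/c} in the comparison of the logarithmic-mean function with T on the upper half-space is sharp: for every c > 0 and every ε > 0 there exist distinct points x, y ∈ ℍⁿ such that |x−y|/(|x−y| + 2c·L(xₙ, yₙ)) > (max{1, 1/c} − ε)·T(x,y). -/

import Mathlib

/-- The logarithmic mean of two positive reals. -/
noncomputable def logMean (a b : ℝ) : ℝ :=
  if a = b then a else (a - b) / (Real.log a - Real.log b)

/-!
For two points at the same height `h` and distance `d`, both sides of the comparison are explicit,
and the quotient of the logarithmic-mean function by `T` is `√(d² + 4h²) / (d + 2ch)`. It tends to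
`1 / c` as `d → 0` and to `1` as `d → ∞`, so already on each horosphere
`xₙ = h` no constant smaller than `max 1 (1 / c)` bounds it.
-/

open Filter Topology

theorem logMean_self (a : ℝ) : logMean a a = a := if_pos rfl

theorem exists_apply_eq_and_dist_eq {ι : Type*} [Fintype ι] {i j : ι} (hij : i ≠ j)
    (x : EuclideanSpace ℝ ι) {d : ℝ} (hd : 0 ≤ d) : ∃ y, y i = x i ∧ dist x y = d := by
  classical
  refine ⟨x + EuclideanSpace.single j d, ?_, ?_⟩
  · simp [hij]
  · rw [dist_self_add_right, PiLp.norm_single, Real.norm_of_nonneg hd]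

theorem tendsto_sqrt_sq_add_div_add_atTop (a b : ℝ) :
    Tendsto (fun d : ℝ ↦ √(d ^ 2 + b) / (d + a)) atTop (𝓝 1) := by
  have hnum : Tendsto (fun d : ℝ ↦ √(1 + b / d ^ 2)) atTop (𝓝 1) := by
    simpa using ((tendsto_const_nhds.div_atTop (tendsto_pow_atTop two_ne_zero)).const_add 1).sqrt
  have hden : Tendsto (fun d : ℝ ↦ 1 + a / d) atTop (𝓝 1) := by
    simpa using (tendsto_const_nhds.div_atTop (tendsto_id (α := ℝ))).const_add 1
  have hlim := hnum.div hden one_ne_zero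
  rw [div_one] at hlim
  refine hlim.congr' ?_
  filter_upwards [eventually_gt_atTop 0] with d hd
  have hsqrt : √(d ^ 2 + b) = d * √(1 + b / d ^ 2) := by
    have hsq : d ^ 2 + b = d ^ 2 * (1 + b / d ^ 2) := by field_simp
    rw [hsq, Real.sqrt_mul (sq_nonneg d), Real.sqrt_sq hd.le]
  have hadd : d + a = d * (1 + a / d) := by field_simp
  rw [Pi.div_apply, hsqrt, hadd, mul_div_mul_left _ _ hd.ne']

theorem tendsto_sqrt_sq_add_div_add_nhds_zero {a : ℝ} (ha : a ≠ 0) (b : ℝ) :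
    Tendsto (fun d : ℝ ↦ √(d ^ 2 + b) / (d + a)) (𝓝 0) (𝓝 (√b / a)) := by
  have hcont : ContinuousAt (fun d : ℝ ↦ √(d ^ 2 + b) / (d + a)) 0 :=
    ContinuousAt.div (by fun_prop) (by fun_prop) (by simpa using ha)
  simpa using hcont.tendsto

theorem exists_pos_lt_sqrt_sq_add_div_add {a b m : ℝ} (ha : a ≠ 0) (hm : m < max 1 (√b / a)) :
    ∃ d : ℝ, 0 < d ∧ m < √(d ^ 2 + b) / (d + a) := by
  rcases lt_max_iff.1 hm with hm | hm
  · exact ((eventually_gt_atTop 0).and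
      ((tendsto_sqrt_sq_add_div_add_atTop a b).eventually_const_lt hm)).exists
  · have hlim := (tendsto_sqrt_sq_add_div_add_nhds_zero ha b).mono_left
      (nhdsWithin_le_nhds (s := Set.Ioi 0))
    exact (eventually_mem_nhdsWithin.and (hlim.eventually_const_lt hm)).exists

theorem stmt17_general {ι : Type*} [Fintype ι] {i j : ι} (hij : i ≠ j) {c m : ℝ} (hc : 0 < c)
    (hm : m < max 1 (1 / c)) {x : EuclideanSpace ℝ ι} (hx : 0 < x i) :
    ∃ y ∈ {p : EuclideanSpace ℝ ι | 0 < p i}, x ≠ y ∧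
      dist x y / (dist x y + 2 * c * logMean (x i) (y i)) >
        m * (dist x y / √(dist x y ^ 2 + 4 * x i * y i)) := by
  have hlim : √(4 * x i * x i) / (2 * c * x i) = 1 / c := by
    rw [show 4 * x i * x i = (2 * x i) ^ 2 by ring, Real.sqrt_sq (by positivity)]
    field_simp
  obtain ⟨d, hd, hmd⟩ : ∃ d, 0 < d ∧ m < √(d ^ 2 + 4 * x i * x i) / (d + 2 * c * x i) :=
    exists_pos_lt_sqrt_sq_add_div_add (by positivity) (by rwa [hlim])
  obtain ⟨y, hyi, hdist⟩ := exists_apply_eq_and_dist_eq hij x hd.le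
  refine ⟨y, hx.trans_eq hyi.symm, dist_pos.1 (hd.trans_eq hdist.symm), ?_⟩
  rw [hdist, hyi, logMean_self]
  have hT : 0 < √(d ^ 2 + 4 * x i * x i) := by positivity
  calc m * (d / √(d ^ 2 + 4 * x i * x i))
      < √(d ^ 2 + 4 * x i * x i) / (d + 2 * c * x i) * (d / √(d ^ 2 + 4 * x i * x i)) := by gcongr
    _ = d / (d + 2 * c * x i) := by rw [mul_comm, div_mul_div_cancel₀ hT.ne']

theorem stmt17 (n : ℕ) (hn : 2 ≤ n) (c : ℝ) (hc : 0 < c) (ε : ℝ) (hε : 0 < ε) :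
    ∃ x ∈ {p : EuclideanSpace ℝ (Fin n) | 0 < p ⟨n - 1, by omega⟩},
      ∃ y ∈ {p : EuclideanSpace ℝ (Fin n) | 0 < p ⟨n - 1, by omega⟩}, x ≠ y ∧
        dist x y / (dist x y + 2 * c * logMean (x ⟨n - 1, by omega⟩) (y ⟨n - 1, by omega⟩)) >
          (max 1 (1 / c) - ε) *
            (dist x y /
              Real.sqrt (dist x y ^ 2 + 4 * x ⟨n - 1, by omega⟩ * y ⟨n - 1, by omega⟩)) := by
  have hij : (⟨n - 1, by omega⟩ : Fin n) ≠ ⟨0, by omega⟩ := Fin.ne_of_val_ne (by dsimp only; omega)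
  have hx : 0 < EuclideanSpace.single (⟨n - 1, by omega⟩ : Fin n) (1 : ℝ) ⟨n - 1, by omega⟩ := by
    simp
  exact ⟨_, hx, stmt17_general hij hc (sub_lt_self _ hε) hx⟩
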